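/- arXiv:1011.3322 — 2 statements merged into one kernel-verified Lean document; each statement's English description precedes it below -/
import Mathlib

section
/- Let R be a strongly regular right cell of a fiat category C with involution *. Then R contains an indecomposable 1-morphism G with G isomorphic to G*, and this element is unique: any F in R with F isomorphic to F* is isomorphic to G. (The element G is the Duflo element G_R of the right cell R.) -/
open CategoryTheory CategoryTheory.Limits

universe w v u

attribute [local instance] CategoryTheory.Limits.hasBinaryBiproducts_of_finite_biproducts

namespace CellTwoRep

variable {C : Type u} [Bicategory.{w, v} C]

/-- `G` is a retract (direct summand) of `F` in a hom-category of the bicategory `C`. -/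
def IsSummand {a b : C} (G F : a ⟶ b) : Prop :=
  ∃ (ι : G ⟶ F) (π : F ⟶ G), ι ≫ π = 𝟙 G

/-- Cast a 1-morphism along equalities of objects. -/
def castHom {a a' b b' : C} (h₁ : a = a') (h₂ : b = b') (f : a ⟶ b) : a' ⟶ b' :=
  h₁ ▸ h₂ ▸ f

section Indec

variable [∀ a b : C, Preadditive (a ⟶ b)] [∀ a b : C, HasFiniteBiproducts (a ⟶ b)]

/-- An indecomposable 1-morphism: nonzero, and any decomposition as a biproduct is trivial. -/
def Indec {a b : C} (F : a ⟶ b) : Prop :=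
  ¬ IsZero F ∧ ∀ G H : a ⟶ b, Nonempty (F ≅ G ⊞ H) → IsZero G ∨ IsZero H

end Indec

/-- A 1-morphism of `C` together with its endpoints. -/
structure OneMor (C : Type u) [Bicategory.{w, v} C] where
  src : C
  tgt : C
  mor : src ⟶ tgt

/-- right preorder: `F ≤_R G` iff `G` is a direct summand of `H ∘ F` for some `H`. -/
def leR (F G : OneMor C) : Prop :=
  ∃ (h : F.src = G.src) (H : F.tgt ⟶ G.tgt),
    IsSummand G.mor (castHom h rfl F.mor ≫ H)

/-- left preorder: `F ≤_L G` iff `G` is a direct summand of `F ∘ H` for some `H`. -/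
def leL (F G : OneMor C) : Prop :=
  ∃ (h : F.tgt = G.tgt) (H : G.src ⟶ F.src),
    IsSummand G.mor (H ≫ castHom rfl h F.mor)

/-- two-sided preorder: `F ≤_LR G` iff `G` is a direct summand of `H₂ ∘ F ∘ H₁`. -/
def leLR (F G : OneMor C) : Prop :=
  ∃ (H₁ : G.src ⟶ F.src) (H₂ : F.tgt ⟶ G.tgt),
    IsSummand G.mor (H₁ ≫ F.mor ≫ H₂)

def simR (F G : OneMor C) : Prop := leR F G ∧ leR G F
def simL (F G : OneMor C) : Prop := leL F G ∧ leL G F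
def simLR (F G : OneMor C) : Prop := leLR F G ∧ leLR G F

/-- Isomorphism of 1-morphisms (with possibly different, but equal, endpoints). -/
def IsoM (F G : OneMor C) : Prop :=
  ∃ (h₁ : F.src = G.src) (h₂ : F.tgt = G.tgt), Nonempty (castHom h₁ h₂ F.mor ≅ G.mor)

section Cells

variable [∀ a b : C, Preadditive (a ⟶ b)] [∀ a b : C, HasFiniteBiproducts (a ⟶ b)]

def IndecM (F : OneMor C) : Prop := Indec F.mor

/-- A right cell: the `∼_R`-equivalence class of some indecomposable 1-morphism. -/
def IsRightCell (R : Set (OneMor C)) : Prop :=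
  ∃ F : OneMor C, IndecM F ∧ R = {G | IndecM G ∧ simR F G}

def IsLeftCell (L : Set (OneMor C)) : Prop :=
  ∃ F : OneMor C, IndecM F ∧ L = {G | IndecM G ∧ simL F G}

def IsTwoSidedCell (Q : Set (OneMor C)) : Prop :=
  ∃ F : OneMor C, IndecM F ∧ Q = {G | IndecM G ∧ simLR F G}

/-- The right order on cells. -/
def cellLeR (R R' : Set (OneMor C)) : Prop := ∃ F ∈ R, ∃ G ∈ R', leR F G

/-- The left order on cells. -/
def cellLeL (L L' : Set (OneMor C)) : Prop := ∃ F ∈ L, ∃ G ∈ L', leL F G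

/-- A regular two-sided cell: distinct right cells inside it are incomparable for `≤_R`. -/
def IsRegular (Q : Set (OneMor C)) : Prop :=
  IsTwoSidedCell Q ∧ ∀ R R' : Set (OneMor C), IsRightCell R → IsRightCell R' →
    R ⊆ Q → R' ⊆ Q → R ≠ R' → ¬ cellLeR R R' ∧ ¬ cellLeR R' R

/-- A strongly regular two-sided cell: regular, and every left cell meets every right cell
inside it in exactly one isomorphism class. -/
def IsStronglyRegular (Q : Set (OneMor C)) : Prop :=
  IsRegular Q ∧ ∀ L R : Set (OneMor C), IsLeftCell L → IsRightCell R → L ⊆ Q → R ⊆ Q →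
    ∃ F, F ∈ L ∩ R ∧ ∀ G, G ∈ L ∩ R → IsoM F G

end Cells

/-- All the axioms of a fiat (`k`-finitary with involution and adjunctions) 2-category,
on top of a strict bicategory whose hom-categories are additive and `k`-linear. -/
structure FiatAxioms (k : Type*) [Field k] [IsAlgClosed k]
    (C : Type u) [Bicategory.{w, v} C] [Bicategory.Strict C]
    [∀ a b : C, Preadditive (a ⟶ b)] [∀ a b : C, HasFiniteBiproducts (a ⟶ b)]
    [∀ a b : C, Linear k (a ⟶ b)] : Type (max u v w) where
  /-- finitely many objects -/
  finObj : Finite C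
  /-- each hom-category is idempotent complete -/
  idemComplete : ∀ a b : C, IsIdempotentComplete (a ⟶ b)
  /-- finite-dimensional spaces of 2-morphisms -/
  finDim : ∀ (a b : C) (f g : a ⟶ b), FiniteDimensional k (f ⟶ g)
  /-- finitely many isomorphism classes of indecomposable 1-morphisms -/
  finIndec : ∀ a b : C, ∃ (n : ℕ) (ι : Fin n → (a ⟶ b)),
      ∀ F : a ⟶ b, Indec F → ∃ i, Nonempty (F ≅ ι i)
  /-- each identity 1-morphism is indecomposable -/
  idIndec : ∀ a : C, Indec (𝟙 a)
  /-- horizontal composition is additive in the second variable -/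
  whiskerLeft_add : ∀ {a b c : C} (f : a ⟶ b) {g h : b ⟶ c} (η θ : g ⟶ h),
      Bicategory.whiskerLeft f (η + θ) =
        Bicategory.whiskerLeft f η + Bicategory.whiskerLeft f θ
  /-- horizontal composition is additive in the first variable -/
  whiskerRight_add : ∀ {a b c : C} {f g : a ⟶ b} (η θ : f ⟶ g) (h : b ⟶ c),
      Bicategory.whiskerRight (η + θ) h =
        Bicategory.whiskerRight η h + Bicategory.whiskerRight θ h
  /-- the involution on 1-morphisms -/
  star : ∀ {a b : C}, (a ⟶ b) → (b ⟶ a)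
  /-- the involution on 2-morphisms -/
  star2 : ∀ {a b : C} {f g : a ⟶ b}, (f ⟶ g) → (star f ⟶ star g)
  star2_id : ∀ {a b : C} (f : a ⟶ b), star2 (𝟙 f) = 𝟙 (star f)
  star2_comp : ∀ {a b : C} {f g h : a ⟶ b} (η : f ⟶ g) (θ : g ⟶ h),
      star2 (η ≫ θ) = star2 η ≫ star2 θ
  /-- the involution is a weak anti-homomorphism -/
  starComp : ∀ {a b c : C} (f : a ⟶ b) (g : b ⟶ c),
      Nonempty (star (f ≫ g) ≅ star g ≫ star f)
  starId : ∀ a : C, Nonempty (star (𝟙 a) ≅ 𝟙 a)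
  /-- the involution is weakly involutive -/
  starStar : ∀ {a b : C} (f : a ⟶ b), Nonempty (star (star f) ≅ f)
  /-- adjunctions: every 1-morphism `f` is left adjoint to `star f` -/
  adj : ∀ {a b : C} (f : a ⟶ b), Nonempty (Bicategory.Adjunction f (star f))


/-- The involution applied to a 1-morphism together with its endpoints. -/
def starM (k : Type*) [Field k] [IsAlgClosed k]
    {C : Type u} [Bicategory.{w, v} C] [Bicategory.Strict C]
    [∀ a b : C, Preadditive (a ⟶ b)] [∀ a b : C, HasFiniteBiproducts (a ⟶ b)]
    [∀ a b : C, Linear k (a ⟶ b)]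
    (S : FiatAxioms k C) (F : OneMor C) : OneMor C :=
  ⟨F.tgt, F.src, S.star F.mor⟩

/-!
The involution exchanges left and right cells, and it preserves every two-sided cell: by the
triangle identities `F` is a direct summand of `F ≫ F* ≫ F` and `F*` is one of `F* ≫ F ≫ F*`.
Hence, for a right cell `R` in a strongly regular two-sided cell `Q`, the left cell
`L = {F | F* ∈ R}` also lies in `Q`, so that `L ∩ R` is a single isomorphism class. As `L ∩ R` is
stable under `*` and contains every self-dual element of `R`, that class is the unique self-dual
one.

That `F*` is again indecomposable when `F` is follows from `*` being a contravariant equivalence of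
hom-categories, with mates as its action on 2-morphisms.
-/

open Bicategory

section Indecomposable

variable {A : Type*} [Category* A] [HasZeroMorphisms A] [HasBinaryBiproducts A]

theorem indecomposable_of_iso {X Y : A} (e : X ≅ Y) (hX : Indecomposable X) : Indecomposable Y :=
  ⟨fun hY ↦ hX.1 (hY.of_iso e), fun Z W f ↦ hX.2 Z W (e ≪≫ f)⟩

theorem indecomposable_of_indecomposable_op {X : A} (hX : Indecomposable (Opposite.op X)) :
    Indecomposable X :=
  ⟨fun h ↦ hX.1 h.op,
    fun Y Z e ↦ (hX.2 _ _ (e.symm.op ≪≫ biprod.opIso Y Z)).imp IsZero.unop IsZero.unop⟩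

theorem indecomposable_of_indecomposable_obj {B : Type*} [Category* B] [HasZeroMorphisms B]
    [HasBinaryBiproducts B] (Φ : A ⥤ B) [Φ.Full] [Φ.Faithful] [Φ.PreservesZeroMorphisms]
    [PreservesBinaryBiproducts Φ] {X : A} (hX : Indecomposable (Φ.obj X)) : Indecomposable X :=
  ⟨fun h ↦ hX.1 (Φ.map_isZero h), fun Y Z e ↦ (hX.2 _ _ (Φ.mapIso e ≪≫ Φ.mapBiprod Y Z)).imp
    (.of_full_of_faithful_of_isZero Φ Y) (.of_full_of_faithful_of_isZero Φ Z)⟩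

end Indecomposable

section Summands

theorem isSummand_iff_nonempty_retract {a b : C} {F G : a ⟶ b} :
    IsSummand F G ↔ Nonempty (Retract F G) :=
  ⟨fun ⟨i, r, h⟩ ↦ ⟨⟨i, r, h⟩⟩, fun ⟨h⟩ ↦ ⟨h.i, h.r, h.retract⟩⟩

theorem IsSummand.of_iso {a b : C} {F G : a ⟶ b} (e : F ≅ G) : IsSummand F G :=
  isSummand_iff_nonempty_retract.2 ⟨.ofIso e⟩

theorem IsSummand.trans {a b : C} {F G H : a ⟶ b} (h₁ : IsSummand F G) (h₂ : IsSummand G H) :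
    IsSummand F H := by
  rw [isSummand_iff_nonempty_retract] at h₁ h₂ ⊢
  exact h₁.elim fun ρ ↦ h₂.map fun σ ↦ ρ.trans σ

theorem IsSummand.map {a b c d : C} {F G : a ⟶ b} (h : IsSummand F G)
    (Φ : (a ⟶ b) ⥤ (c ⟶ d)) : IsSummand (Φ.obj F) (Φ.obj G) := by
  rw [isSummand_iff_nonempty_retract] at h ⊢
  exact h.map (.map · Φ)

theorem IsSummand.whiskerLeft {a b c : C} (H : a ⟶ b) {F G : b ⟶ c} (h : IsSummand F G) :
    IsSummand (H ≫ F) (H ≫ G) :=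
  h.map (precomp c H)

theorem IsSummand.whiskerRight {a b c : C} {F G : a ⟶ b} (h : IsSummand F G) (H : b ⟶ c) :
    IsSummand (F ≫ H) (G ≫ H) :=
  h.map (postcomp a H)

theorem IsSummand.rightAdjoint {a b : C} {l l' : a ⟶ b} {r r' : b ⟶ a} (adj : l ⊣ r)
    (adj' : l' ⊣ r') (h : IsSummand l l') : IsSummand r r' := by
  obtain ⟨i, p, hip⟩ := h
  exact ⟨conjugateEquiv adj adj' p, conjugateEquiv adj' adj i, conjugateEquiv_comm adj adj' hip⟩

theorem isSummand_left_of_adjunction {a b : C} {l : a ⟶ b} {r : b ⟶ a} (adj : l ⊣ r) :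
    IsSummand l (l ≫ r ≫ l) := by
  refine ⟨(λ_ l).inv ≫ adj.unit ▷ l ≫ (α_ l r l).hom, l ◁ adj.counit ≫ (ρ_ l).hom, ?_⟩
  have h : adj.unit ▷ l ≫ (α_ l r l).hom ≫ l ◁ adj.counit = (λ_ l).hom ≫ (ρ_ l).inv := by
    rw [← adj.left_triangle]
    simp [leftZigzag, bicategoricalComp]
  simp [reassoc_of% h]

theorem isSummand_right_of_adjunction {a b : C} {l : a ⟶ b} {r : b ⟶ a} (adj : l ⊣ r) :
    IsSummand r (r ≫ l ≫ r) := by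
  refine ⟨(ρ_ r).inv ≫ r ◁ adj.unit, (α_ r l r).inv ≫ adj.counit ▷ r ≫ (λ_ r).hom, ?_⟩
  have h : r ◁ adj.unit ≫ (α_ r l r).inv ≫ adj.counit ▷ r = (ρ_ r).hom ≫ (λ_ r).inv := by
    rw [← adj.right_triangle]
    simp [rightZigzag, bicategoricalComp]
  simp [reassoc_of% h]

end Summands

section Preorders

variable {F G H : OneMor C}

theorem leR.trans (h₁ : leR F G) (h₂ : leR G H) : leR F H := by
  obtain ⟨a, b, F⟩ := F
  obtain ⟨a', b', G⟩ := G
  obtain ⟨a'', b'', H⟩ := H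
  obtain ⟨rfl : a = a', K, hK⟩ := h₁
  obtain ⟨rfl : a = a'', M, hM⟩ := h₂
  exact ⟨rfl, K ≫ M, (hM.trans (hK.whiskerRight M)).trans (.of_iso (α_ F K M))⟩

theorem leL.trans (h₁ : leL F G) (h₂ : leL G H) : leL F H := by
  obtain ⟨a, b, F⟩ := F
  obtain ⟨a', b', G⟩ := G
  obtain ⟨a'', b'', H⟩ := H
  obtain ⟨rfl : b = b', K, hK⟩ := h₁
  obtain ⟨rfl : b = b'', M, hM⟩ := h₂
  exact ⟨rfl, M ≫ K, (hM.trans (hK.whiskerLeft M)).trans (.of_iso (α_ M K F).symm)⟩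

theorem leLR.trans (h₁ : leLR F G) (h₂ : leLR G H) : leLR F H := by
  obtain ⟨K₁, K₂, hK⟩ := h₁
  obtain ⟨M₁, M₂, hM⟩ := h₂
  refine ⟨M₁ ≫ K₁, K₂ ≫ M₂, (hM.trans ((hK.whiskerRight M₂).whiskerLeft M₁)).trans (.of_iso ?_)⟩
  exact whiskerLeftIso M₁ (α_ _ _ _ ≪≫ whiskerLeftIso K₁ (α_ _ _ _)) ≪≫ (α_ _ _ _).symm

theorem simR.trans (h₁ : simR F G) (h₂ : simR G H) : simR F H :=
  ⟨h₁.1.trans h₂.1, h₂.2.trans h₁.2⟩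

theorem simL.trans (h₁ : simL F G) (h₂ : simL G H) : simL F H :=
  ⟨h₁.1.trans h₂.1, h₂.2.trans h₁.2⟩

theorem simLR.trans (h₁ : simLR F G) (h₂ : simLR G H) : simLR F H :=
  ⟨h₁.1.trans h₂.1, h₂.2.trans h₁.2⟩

theorem IsoM.symm (h : IsoM F G) : IsoM G F := by
  obtain ⟨a, b, F⟩ := F
  obtain ⟨a', b', G⟩ := G
  obtain ⟨rfl : a = a', rfl : b = b', ⟨e⟩⟩ := h
  exact ⟨rfl, rfl, ⟨e.symm⟩⟩

theorem IsoM.leR (h : IsoM F G) : leR F G := by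
  obtain ⟨a, b, F⟩ := F
  obtain ⟨a', b', G⟩ := G
  obtain ⟨rfl : a = a', rfl : b = b', ⟨e⟩⟩ := h
  exact ⟨rfl, 𝟙 b, .of_iso (e.symm ≪≫ (ρ_ F).symm)⟩

theorem IsoM.leL (h : IsoM F G) : leL F G := by
  obtain ⟨a, b, F⟩ := F
  obtain ⟨a', b', G⟩ := G
  obtain ⟨rfl : a = a', rfl : b = b', ⟨e⟩⟩ := h
  exact ⟨rfl, 𝟙 a, .of_iso (e.symm ≪≫ (λ_ F).symm)⟩

theorem IsoM.simR (h : IsoM F G) : simR F G :=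
  ⟨h.leR, h.symm.leR⟩

theorem IsoM.simL (h : IsoM F G) : simL F G :=
  ⟨h.leL, h.symm.leL⟩

end Preorders

section CellMembership

variable [∀ a b : C, Preadditive (a ⟶ b)] [∀ a b : C, HasFiniteBiproducts (a ⟶ b)]
  {F G : OneMor C}

theorem indec_iff_indecomposable {a b : C} {F : a ⟶ b} : Indec F ↔ Indecomposable F :=
  and_congr_right fun _ ↦ forall₂_congr fun _ _ ↦ Nonempty.forall

theorem IndecM.of_isoM (hF : IndecM F) (h : IsoM F G) : IndecM G := by
  obtain ⟨a, b, F⟩ := F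
  obtain ⟨a', b', G⟩ := G
  obtain ⟨rfl : a = a', rfl : b = b', ⟨e⟩⟩ := h
  exact indec_iff_indecomposable.2 (indecomposable_of_iso e (indec_iff_indecomposable.1 hF))

theorem IsRightCell.mem_of_isoM {R : Set (OneMor C)} (hR : IsRightCell R) (hF : F ∈ R)
    (h : IsoM F G) : G ∈ R := by
  obtain ⟨F₀, -, rfl⟩ := hR
  exact ⟨hF.1.of_isoM h, hF.2.trans h.simR⟩

end CellMembership

/-- A weak involution `F ↦ F*` on the 1-morphisms of a bicategory for which `F*` is right adjoint
to `F`. The action of `*` on 2-morphisms and the isomorphisms `(F ≫ G)* ≅ G* ≫ F*` are not part of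
the data: they are determined by the adjunctions, through mates. -/
structure AdjointInvolution (C : Type u) [Bicategory.{w, v} C] where
  star {a b : C} : (a ⟶ b) → (b ⟶ a)
  adj {a b : C} (F : a ⟶ b) : F ⊣ star F
  starStarIso {a b : C} (F : a ⟶ b) : star (star F) ≅ F

namespace AdjointInvolution

variable (D : AdjointInvolution C)

/-- The involution applied to a 1-morphism together with its endpoints. -/
def starOneMor (F : OneMor C) : OneMor C :=
  ⟨F.tgt, F.src, D.star F.mor⟩

/-- The involution as a contravariant functor on a hom-category, sending a 2-morphism to its
mate. -/
def starFunctor (a b : C) : (a ⟶ b)ᵒᵖ ⥤ (b ⟶ a) where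
  obj F := D.star F.unop
  map η := conjugateEquiv (D.adj _) (D.adj _) η.unop

instance (a b : C) : (D.starFunctor a b).Full where
  map_surjective η :=
    ⟨((conjugateEquiv (D.adj _) (D.adj _)).symm η).op, Equiv.apply_symm_apply _ η⟩

instance (a b : C) : (D.starFunctor a b).Faithful where
  map_injective h := Quiver.Hom.unop_inj ((conjugateEquiv (D.adj _) (D.adj _)).injective h)

instance (a b : C) : (D.starFunctor a b).EssSurj where
  mem_essImage F := ⟨.op (D.star F), ⟨D.starStarIso F⟩⟩

instance (a b : C) : (D.starFunctor a b).IsEquivalence where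

theorem isoM_starOneMor_starOneMor (F : OneMor C) : IsoM (D.starOneMor (D.starOneMor F)) F :=
  ⟨rfl, rfl, ⟨D.starStarIso F.mor⟩⟩

variable {F G : OneMor C}

theorem leL_starOneMor_of_leR (h : leR F G) : leL (D.starOneMor F) (D.starOneMor G) := by
  obtain ⟨a, b, F⟩ := F
  obtain ⟨a', b', G⟩ := G
  obtain ⟨rfl : a = a', K, hK⟩ := h
  exact ⟨rfl, D.star K, hK.rightAdjoint (D.adj G) ((D.adj F).comp (D.adj K))⟩

theorem leR_starOneMor_of_leL (h : leL F G) : leR (D.starOneMor F) (D.starOneMor G) := by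
  obtain ⟨a, b, F⟩ := F
  obtain ⟨a', b', G⟩ := G
  obtain ⟨rfl : b = b', K, hK⟩ := h
  exact ⟨rfl, D.star K, hK.rightAdjoint (D.adj G) ((D.adj K).comp (D.adj F))⟩

theorem simL_starOneMor_of_simR (h : simR F G) : simL (D.starOneMor F) (D.starOneMor G) :=
  ⟨D.leL_starOneMor_of_leR h.1, D.leL_starOneMor_of_leR h.2⟩

theorem simR_starOneMor_of_simL (h : simL F G) : simR (D.starOneMor F) (D.starOneMor G) :=
  ⟨D.leR_starOneMor_of_leL h.1, D.leR_starOneMor_of_leL h.2⟩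

theorem simR_starOneMor_iff_simL : simR F (D.starOneMor G) ↔ simL (D.starOneMor F) G :=
  ⟨fun h ↦ (D.simL_starOneMor_of_simR h).trans (D.isoM_starOneMor_starOneMor G).simL,
    fun h ↦ (D.isoM_starOneMor_starOneMor F).symm.simR.trans (D.simR_starOneMor_of_simL h)⟩

theorem simLR_starOneMor_self (F : OneMor C) : simLR (D.starOneMor F) F :=
  ⟨⟨F.mor, F.mor, isSummand_left_of_adjunction (D.adj F.mor)⟩,
    ⟨D.star F.mor, D.star F.mor, isSummand_right_of_adjunction (D.adj F.mor)⟩⟩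

variable [∀ a b : C, Preadditive (a ⟶ b)] [∀ a b : C, HasFiniteBiproducts (a ⟶ b)]

theorem indec_of_indec_star {a b : C} {F : a ⟶ b} (h : Indec (D.star F)) : Indec F := by
  have := preservesBinaryBiproducts_of_preservesBinaryProducts (D.starFunctor a b)
  rw [indec_iff_indecomposable] at h ⊢
  exact indecomposable_of_indecomposable_op
    (indecomposable_of_indecomposable_obj (D.starFunctor a b) h)

theorem indecM_starOneMor_iff : IndecM (D.starOneMor F) ↔ IndecM F :=
  ⟨D.indec_of_indec_star,
    fun h ↦ D.indec_of_indec_star (h.of_isoM (D.isoM_starOneMor_starOneMor F).symm)⟩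

theorem isLeftCell_preimage_starOneMor {R : Set (OneMor C)} (hR : IsRightCell R) :
    IsLeftCell (D.starOneMor ⁻¹' R) := by
  obtain ⟨F, hF, rfl⟩ := hR
  exact ⟨D.starOneMor F, D.indecM_starOneMor_iff.2 hF,
    Set.ext fun _ ↦ and_congr D.indecM_starOneMor_iff D.simR_starOneMor_iff_simL⟩

theorem preimage_starOneMor_subset {Q : Set (OneMor C)} (hQ : IsTwoSidedCell Q) :
    D.starOneMor ⁻¹' Q ⊆ Q := by
  obtain ⟨F₀, -, rfl⟩ := hQ
  exact fun F hF ↦ ⟨D.indecM_starOneMor_iff.1 hF.1, hF.2.trans (D.simLR_starOneMor_self F)⟩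

end AdjointInvolution

theorem duflo_element_exists_unique_general
    [∀ a b : C, Preadditive (a ⟶ b)] [∀ a b : C, HasFiniteBiproducts (a ⟶ b)]
    (D : AdjointInvolution C) {R Q : Set (OneMor C)} (hR : IsRightCell R) (hQ : IsTwoSidedCell Q)
    (hRQ : R ⊆ Q)
    (hinter : ∀ L : Set (OneMor C), IsLeftCell L → L ⊆ Q →
      ∃ F, F ∈ L ∩ R ∧ ∀ G, G ∈ L ∩ R → IsoM F G) :
    ∃ G ∈ R, IsoM G (D.starOneMor G) ∧
      ∀ F ∈ R, IsoM F (D.starOneMor F) → IsoM F G := by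
  obtain ⟨G, ⟨hGstar : D.starOneMor G ∈ R, hG⟩, hunique⟩ :=
    hinter (D.starOneMor ⁻¹' R) (D.isLeftCell_preimage_starOneMor hR)
      ((Set.preimage_mono hRQ).trans (D.preimage_starOneMor_subset hQ))
  refine ⟨G, hG, hunique _ ⟨?_, hGstar⟩, fun F hF hFstar ↦ ?_⟩
  · exact hR.mem_of_isoM hG (D.isoM_starOneMor_starOneMor G).symm
  · exact (hunique F ⟨hR.mem_of_isoM hF hFstar, hF⟩).symm

/-- The involution of a fiat category, with a choice of the adjunctions `F ⊣ F*` and of the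
isomorphisms `F** ≅ F`, which `FiatAxioms` only asserts to exist. -/
noncomputable def FiatAxioms.adjointInvolution {k : Type*} [Field k] [IsAlgClosed k]
    [Bicategory.Strict C] [∀ a b : C, Preadditive (a ⟶ b)]
    [∀ a b : C, HasFiniteBiproducts (a ⟶ b)] [∀ a b : C, Linear k (a ⟶ b)]
    (S : FiatAxioms k C) : AdjointInvolution C where
  star := S.star
  adj F := (S.adj F).some
  starStarIso F := (S.starStar F).some

/-- A strongly regular right cell `R` of a fiat category contains an
element `G` with `G ≅ G*` (the Duflo element), unique up to isomorphism. -/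
theorem duflo_element_exists_unique
    (k : Type*) [Field k] [IsAlgClosed k]
    {C : Type u} [Bicategory.{w, v} C] [Bicategory.Strict C]
    [∀ a b : C, Preadditive (a ⟶ b)] [∀ a b : C, HasFiniteBiproducts (a ⟶ b)]
    [∀ a b : C, Linear k (a ⟶ b)]
    (S : FiatAxioms k C)
    (R : Set (OneMor C)) (hR : IsRightCell R)
    (hsr : ∃ Q : Set (OneMor C), IsStronglyRegular Q ∧ R ⊆ Q) :
    ∃ G ∈ R, IsoM G (starM k S G) ∧
      ∀ F ∈ R, IsoM F (starM k S F) → IsoM F G := by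
  obtain ⟨Q, ⟨⟨hQ, -⟩, hinter⟩, hRQ⟩ := hsr
  exact duflo_element_exists_unique_general S.adjointInvolution hR hQ hRQ
    fun L hL hLQ ↦ hinter L R hL hR hLQ hRQ

end CellTwoRep
end

section
/- Let C be a fiat category with involution *, let i and j be objects of C, let F, H: i -> j be 1-morphisms and let G: i -> i be an indecomposable 1-morphism with G isomorphic to G*. If H* o F is isomorphic to G^{⊕m} and F* o H is isomorphic to G^{⊕m'} for natural numbers m and m', then m = m'. -/
open CategoryTheory CategoryTheory.Limits

universe w v u

attribute [local instance] CategoryTheory.Limits.hasBinaryBiproducts_of_finite_biproducts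

namespace CellTwoRep

variable {C : Type u} [Bicategory.{w, v} C]

/-!
Right adjoints are unique up to isomorphism, taking them reverses composition, and, as conjugation
of 2-morphisms is additive, it preserves finite direct sums. Since `F* ∘ H` is right adjoint to
`H* ∘ F ≅ G^{⊕m}`, it is isomorphic to `(G*)^{⊕m} ≅ G^{⊕m}`. The multiplicity of `G` in a sum of
copies of `G` is well defined because the ring `End G`, a nonzero finite-dimensional algebra, has
invariant basis number.
-/

section Multiplicity

variable {D : Type*} [Category* D] [Preadditive D] {X : D}

theorem invariantBasisNumber_end (R : Type*) [CommRing R] [IsNoetherianRing R] [Linear R D]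
    [Module.Finite R (X ⟶ X)] (hX : ¬ IsZero X) : InvariantBasisNumber (End X) := by
  have : Nontrivial (End X) := ⟨𝟙 X, 0, fun h => hX ((IsZero.iff_id_eq_zero X).2 h)⟩
  have : Module.Finite R (End X) := ‹Module.Finite R (X ⟶ X)›
  have : IsNoetherianRing (End X) := .of_finite R (End X)
  infer_instance

theorem eq_of_biproduct_const_iso [HasFiniteBiproducts D] [InvariantBasisNumber (End X)] {m n : ℕ}
    (e : (⨁ fun _ : Fin m => X) ≅ ⨁ fun _ : Fin n => X) : m = n := by
  have orthogonal : HomOrthogonal fun _ : Unit => X := Subsingleton.pairwise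
  obtain ⟨σ, -⟩ := orthogonal.equiv_of_iso (f := fun _ => ()) (g := fun _ => ()) e
  exact Fin.equiv_iff_eq.1 ⟨σ⟩

end Multiplicity

section Adjoints

open Bicategory

/-- Transport of an adjunction along an isomorphism of left adjoints. -/
def adjunctionOfIsoLeft {a b : C} {l l' : a ⟶ b} {r : b ⟶ a} (adj : l ⊣ r) (e : l ≅ l') :
    l' ⊣ r where
  unit := adj.unit ≫ e.hom ▷ r
  counit := r ◁ e.inv ≫ adj.counit
  left_triangle :=
    calc
      _ = 𝟙 _ ⊗≫ adj.unit ▷ l' ⊗≫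
          (e.hom ▷ (r ≫ l') ≫ l' ◁ (r ◁ e.inv ≫ adj.counit)) ⊗≫ 𝟙 _ := by
        bicategory
      _ = 𝟙 _ ⊗≫ (adj.unit ▷ l' ≫ (l ≫ r) ◁ e.inv) ⊗≫ l ◁ adj.counit ⊗≫ e.hom ⊗≫ 𝟙 _ := by
        rw [← whisker_exchange]; bicategory
      _ = 𝟙 _ ⊗≫ e.inv ⊗≫ leftZigzag adj.unit adj.counit ⊗≫ e.hom ⊗≫ 𝟙 _ := by
        rw [← whisker_exchange]; bicategory
      _ = 𝟙 _ ⊗≫ (e.inv ≫ e.hom) ⊗≫ 𝟙 _ := by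
        rw [adj.left_triangle]; bicategory
      _ = _ := by rw [e.inv_hom_id]; bicategory
  right_triangle :=
    calc
      _ = 𝟙 _ ⊗≫ r ◁ adj.unit ⊗≫ r ◁ (e.hom ≫ e.inv) ▷ r ⊗≫ adj.counit ▷ r ⊗≫ 𝟙 _ := by
        bicategory
      _ = 𝟙 _ ⊗≫ rightZigzag adj.unit adj.counit ⊗≫ 𝟙 _ := by
        rw [e.hom_inv_id]; bicategory
      _ = _ := by
        rw [adj.right_triangle]; bicategory

/-- Transport of an adjunction along an isomorphism of right adjoints. -/
def adjunctionOfIsoRight {a b : C} {l : a ⟶ b} {r r' : b ⟶ a} (adj : l ⊣ r) (e : r ≅ r') :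
    l ⊣ r' where
  unit := adj.unit ≫ l ◁ e.hom
  counit := e.inv ▷ l ≫ adj.counit
  left_triangle :=
    calc
      _ = 𝟙 _ ⊗≫ adj.unit ▷ l ⊗≫ l ◁ (e.hom ≫ e.inv) ▷ l ⊗≫ l ◁ adj.counit ⊗≫ 𝟙 _ := by
        bicategory
      _ = 𝟙 _ ⊗≫ leftZigzag adj.unit adj.counit ⊗≫ 𝟙 _ := by
        rw [e.hom_inv_id]; bicategory
      _ = _ := by
        rw [adj.left_triangle]; bicategory
  right_triangle :=
    calc
      _ = 𝟙 _ ⊗≫ r' ◁ adj.unit ⊗≫ ((r' ≫ l) ◁ e.hom ≫ (e.inv ▷ l ≫ adj.counit) ▷ r') ⊗≫ 𝟙 _ := by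
        bicategory
      _ = 𝟙 _ ⊗≫ (r' ◁ adj.unit ≫ e.inv ▷ (l ≫ r)) ⊗≫ adj.counit ▷ r ⊗≫ e.hom ⊗≫ 𝟙 _ := by
        rw [whisker_exchange]; bicategory
      _ = 𝟙 _ ⊗≫ e.inv ⊗≫ rightZigzag adj.unit adj.counit ⊗≫ e.hom ⊗≫ 𝟙 _ := by
        rw [whisker_exchange]; bicategory
      _ = 𝟙 _ ⊗≫ (e.inv ≫ e.hom) ⊗≫ 𝟙 _ := by
        rw [adj.right_triangle]; bicategory
      _ = _ := by rw [e.inv_hom_id]; bicategory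

/-- Whiskering by 1-morphisms is additive on 2-morphisms: the bicategorical analogue of
`MonoidalPreadditive`. -/
class AdditiveWhiskering (C : Type u) [Bicategory.{w, v} C] [∀ a b : C, Preadditive (a ⟶ b)] :
    Prop where
  whiskerLeft_add {a b c : C} (f : a ⟶ b) {g h : b ⟶ c} (η θ : g ⟶ h) :
    f ◁ (η + θ) = f ◁ η + f ◁ θ
  add_whiskerRight {a b c : C} {f g : a ⟶ b} (η θ : f ⟶ g) (h : b ⟶ c) :
    (η + θ) ▷ h = η ▷ h + θ ▷ h

variable [∀ a b : C, Preadditive (a ⟶ b)] [AdditiveWhiskering C]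

/-- Conjugation of 2-morphisms between left adjoints, as an additive equivalence. -/
def conjugateAddEquiv {a b : C} {l₁ l₂ : a ⟶ b} {r₁ r₂ : b ⟶ a} (adj₁ : l₁ ⊣ r₁) (adj₂ : l₂ ⊣ r₂) :
    (l₂ ⟶ l₁) ≃+ (r₁ ⟶ r₂) where
  __ := conjugateEquiv adj₁ adj₂
  map_add' α β := by
    simp only [Equiv.toFun_as_coe, conjugateEquiv_apply', AdditiveWhiskering.whiskerLeft_add,
      AdditiveWhiskering.add_whiskerRight, Preadditive.add_comp, Preadditive.comp_add]

section Bicone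

variable {J : Type*} {a b : C} {f : J → (a ⟶ b)} {g : J → (b ⟶ a)} {r : b ⟶ a}

/-- The bicone on right adjoints of the `f p` whose projections and inclusions are the conjugates
of the inclusions and projections of a bicone on `f`. -/
def conjugateBicone (adj : ∀ p, f p ⊣ g p) (B : Bicone f) (adjB : B.pt ⊣ r) : Bicone g where
  pt := r
  π p := conjugateAddEquiv adjB (adj p) (B.ι p)
  ι p := conjugateAddEquiv (adj p) adjB (B.π p)
  ι_π p q := by
    have conjugate_comp : conjugateAddEquiv (adj p) adjB (B.π p) ≫
        conjugateAddEquiv adjB (adj q) (B.ι q) =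
          conjugateAddEquiv (adj p) (adj q) (B.ι q ≫ B.π p) :=
      conjugateEquiv_comp (adj p) adjB (adj q) _ _
    rw [conjugate_comp]
    split_ifs with h
    · subst h
      rw [bicone_ι_π_self]
      exact conjugateEquiv_id (adj p)
    · rw [bicone_ι_π_ne B (Ne.symm h), map_zero]

theorem sum_conjugateBicone_π_comp_ι [Fintype J] (adj : ∀ p, f p ⊣ g p) {B : Bicone f}
    (hB : B.IsBilimit) (adjB : B.pt ⊣ r) :
    ∑ p, (conjugateBicone adj B adjB).π p ≫ (conjugateBicone adj B adjB).ι p = 𝟙 r :=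
  calc
    _ = ∑ p, conjugateAddEquiv adjB adjB (B.π p ≫ B.ι p) :=
      Finset.sum_congr rfl fun p _ => conjugateEquiv_comp adjB (adj p) adjB _ _
    _ = conjugateAddEquiv adjB adjB (𝟙 B.pt) := by rw [← map_sum, IsBilimit.total hB]
    _ = 𝟙 r := conjugateEquiv_id adjB

end Bicone

variable [∀ a b : C, HasFiniteBiproducts (a ⟶ b)]

/-- A right adjoint of a finite direct sum is the direct sum of right adjoints of the summands. -/
noncomputable def rightAdjointBiproductIso {J : Type*} [Finite J] {a b : C} {f : J → (a ⟶ b)}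
    {g : J → (b ⟶ a)} {r : b ⟶ a} (adj : ∀ p, f p ⊣ g p) (adjB : (⨁ f) ⊣ r) : r ≅ ⨁ g :=
  letI := Fintype.ofFinite J
  biproduct.uniqueUpToIso g
    (isBilimitOfTotal _ (sum_conjugateBicone_π_comp_ι adj (biproduct.isBilimit f) adjB))

theorem eq_of_biproduct_const_adjunction {a b : C} {G : a ⟶ b} {G' : b ⟶ a}
    [InvariantBasisNumber (End G')] (adjG : G ⊣ G') {m n : ℕ}
    (adj : (⨁ fun _ : Fin m => G) ⊣ (⨁ fun _ : Fin n => G')) : m = n :=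
  eq_of_biproduct_const_iso ((rightAdjointBiproductIso (fun _ => adjG) adj).symm)

theorem multiplicity_symmetric_general {a b c : C} {F : a ⟶ b} {F' : b ⟶ a} {H : c ⟶ b}
    {H' : b ⟶ c} {G : a ⟶ c} {G' : c ⟶ a} [InvariantBasisNumber (End G')]
    (adjF : F ⊣ F') (adjH : H' ⊣ H) (adjG : G ⊣ G') {m m' : ℕ}
    (e₁ : F ≫ H' ≅ ⨁ fun _ : Fin m => G) (e₂ : H ≫ F' ≅ ⨁ fun _ : Fin m' => G') : m = m' :=
  eq_of_biproduct_const_adjunction adjG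
    (adjunctionOfIsoRight (adjunctionOfIsoLeft (adjF.comp adjH) e₁) e₂)

end Adjoints

section Fiat

open Bicategory

variable {k : Type*} [Field k] [IsAlgClosed k] [Bicategory.Strict C]
  [∀ a b : C, Preadditive (a ⟶ b)] [∀ a b : C, HasFiniteBiproducts (a ⟶ b)]
  [∀ a b : C, Linear k (a ⟶ b)]

theorem FiatAxioms.additiveWhiskering (S : FiatAxioms k C) : AdditiveWhiskering C :=
  ⟨S.whiskerLeft_add, S.whiskerRight_add⟩

theorem FiatAxioms.nonempty_star_adjunction (S : FiatAxioms k C) {a b : C} (f : a ⟶ b) :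
    Nonempty (S.star f ⊣ f) := by
  obtain ⟨adj⟩ := S.adj (S.star f)
  obtain ⟨e⟩ := S.starStar f
  exact ⟨adjunctionOfIsoRight adj e⟩

theorem FiatAxioms.invariantBasisNumber_end (S : FiatAxioms k C) {a b : C} {f : a ⟶ b}
    (hf : ¬ IsZero f) : InvariantBasisNumber (End f) :=
  have := S.finDim a b f f
  CellTwoRep.invariantBasisNumber_end k hf

end Fiat

/-- In a fiat category, let `F, H : i ⟶ j` and let `G : i ⟶ i` be
indecomposable with `G ≅ G*`.  If `H* ∘ F ≅ G^{⊕m}` and `F* ∘ H ≅ G^{⊕m'}`, then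
`m = m'`. (Composites are written diagrammatically: `H* ∘ F = F ≫ H*`.) -/
theorem multiplicity_symmetric
    (k : Type*) [Field k] [IsAlgClosed k]
    {C : Type u} [Bicategory.{w, v} C] [Bicategory.Strict C]
    [∀ a b : C, Preadditive (a ⟶ b)] [∀ a b : C, HasFiniteBiproducts (a ⟶ b)]
    [∀ a b : C, Linear k (a ⟶ b)]
    (S : FiatAxioms k C)
    (i j : C) (F H : i ⟶ j) (G : i ⟶ i)
    (hG : Indec G) (hGstar : Nonempty (G ≅ S.star G))
    (m m' : ℕ)
    (e₁ : Nonempty ((F ≫ S.star H) ≅ ⨁ (fun _ : Fin m => G)))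
    (e₂ : Nonempty ((H ≫ S.star F) ≅ ⨁ (fun _ : Fin m' => G))) :
    m = m' := by
  have := S.additiveWhiskering
  have := S.invariantBasisNumber_end hG.1
  have adjG := adjunctionOfIsoRight (S.adj G).some hGstar.some.symm
  exact multiplicity_symmetric_general (S.adj F).some (S.nonempty_star_adjunction H).some adjG
    e₁.some e₂.some

end CellTwoRep
end
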